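/- Let ∂ᵢ(τ) denote the formal partial derivative ∂I₄/∂xᵢ of the Igusa quartic evaluated at (P₀(τ),…,P₄(τ)). For every τ ∈ H₂: Ξ₆[δ₁] = 6∂₀+2∂₁+2∂₂+2∂₃, Ξ₆[δ₂] = 6∂₀−2∂₁+2∂₂−2∂₃, Ξ₆[δ₃] = 6∂₀+2∂₁−2∂₂−2∂₃, Ξ₆[δ₄] = 6∂₀−2∂₁−2∂₂+2∂₃, Ξ₆[δ₅] = 4∂₁+2∂₄, Ξ₆[δ₆] = 4∂₁−2∂₄, Ξ₆[δ₇] = 4∂₂+2∂₄, Ξ₆[δ₈] = 4∂₂−2∂₄, Ξ₆[δ₉] = 4∂₃+2∂₄, Ξ₆[δ₁₀] = 4∂₃−2∂₄ (all evaluated at τ). -/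

import Mathlib

/-!
Write a pair of lattice points of `ℤ² × ℤ²` as `(k + l + c, k - l)`, where `c ∈ {0,1}²` is the
parity of their difference. This diagonalizes the quadratic form in the double series
`θ[a;b](τ)²`, which becomes `∑_c (-1)^((a+c)·b) Θ[a+c](τ) Θ[c](τ)`. Squaring once more, the fourth
powers of the ten even theta constants are *linear* forms in `P₀, …, P₄`. Both sides of each
identity are thus cubic in the `P`s, and they agree already as polynomials: the relation
`I₄(P) = 0` is not needed.
-/

open scoped BigOperators

namespace TwoLoop

/-- 2×2 complex matrices. -/
abbrev Mat2 := Matrix (Fin 2) (Fin 2) ℂ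

/-- The genus-2 Siegel upper half space: symmetric 2×2 complex matrices with
positive definite imaginary part. -/
def SiegelH2 : Set Mat2 := {τ | τ.transpose = τ ∧ (τ.map Complex.im).PosDef}

/-- A (half-integer) theta characteristic `[a;b]`, recorded by its rows `a, b ∈ {0,1}²`. -/
abbrev Char := (Fin 2 → ℤ) × (Fin 2 → ℤ)

/-- The theta constant `θ[a;b](τ) = Σ_{n ∈ ℤ²} exp(πi (n+a/2)ᵀ τ (n+a/2) + πi (n+a/2)·b)`. -/
noncomputable def theta (κ : Char) (τ : Mat2) : ℂ :=
  ∑' n : Fin 2 → ℤ,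
    Complex.exp ((Real.pi : ℂ) * Complex.I *
      ((∑ i, ∑ j, ((n i : ℂ) + (κ.1 i : ℂ) / 2) * τ i j * ((n j : ℂ) + (κ.1 j : ℂ) / 2))
        + ∑ i, ((n i : ℂ) + (κ.1 i : ℂ) / 2) * (κ.2 i : ℂ)))

/-- The ten even characteristics δ₁,…,δ₁₀. -/
def δev : Fin 10 → Char :=
  ![(![0,0], ![0,0]), (![0,0], ![0,1]), (![0,0], ![1,0]), (![0,0], ![1,1]),
    (![0,1], ![0,0]), (![0,1], ![1,0]), (![1,0], ![0,0]), (![1,0], ![0,1]),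
    (![1,1], ![0,0]), (![1,1], ![1,1])]

/-- The six odd characteristics ν₁,…,ν₆. -/
def νodd : Fin 6 → Char :=
  ![(![0,1], ![0,1]), (![1,0], ![1,0]), (![0,1], ![1,1]),
    (![1,0], ![1,1]), (![1,1], ![0,1]), (![1,1], ![1,0])]

/-- `Θ[ε](τ) = θ[ε;0](2τ)`. -/
noncomputable def Θf (ε : Fin 2 → ℤ) (τ : Mat2) : ℂ := theta (ε, ![0,0]) ((2 : ℂ) • τ)

noncomputable def P0 (τ : Mat2) : ℂ :=
  Θf ![0,0] τ ^ 4 + Θf ![0,1] τ ^ 4 + Θf ![1,0] τ ^ 4 + Θf ![1,1] τ ^ 4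
noncomputable def P1 (τ : Mat2) : ℂ :=
  2 * (Θf ![0,0] τ ^ 2 * Θf ![0,1] τ ^ 2 + Θf ![1,0] τ ^ 2 * Θf ![1,1] τ ^ 2)
noncomputable def P2 (τ : Mat2) : ℂ :=
  2 * (Θf ![0,0] τ ^ 2 * Θf ![1,0] τ ^ 2 + Θf ![0,1] τ ^ 2 * Θf ![1,1] τ ^ 2)
noncomputable def P3 (τ : Mat2) : ℂ :=
  2 * (Θf ![0,0] τ ^ 2 * Θf ![1,1] τ ^ 2 + Θf ![0,1] τ ^ 2 * Θf ![1,0] τ ^ 2)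
noncomputable def P4 (τ : Mat2) : ℂ :=
  4 * (Θf ![0,0] τ * Θf ![0,1] τ * Θf ![1,0] τ * Θf ![1,1] τ)

/-- The vector `(P₀,…,P₄)`. -/
noncomputable def Pv : Fin 5 → Mat2 → ℂ := ![P0, P1, P2, P3, P4]

open MvPolynomial in
/-- The Igusa quartic as a polynomial in `x₀,…,x₄`. -/
noncomputable def I4poly : MvPolynomial (Fin 5) ℂ :=
  X 4 ^ 4 + X 4 ^ 2 * X 0 ^ 2 - X 4 ^ 2 * X 1 ^ 2 - X 4 ^ 2 * X 2 ^ 2 - X 4 ^ 2 * X 3 ^ 2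
    + X 1 ^ 2 * X 2 ^ 2 + X 1 ^ 2 * X 3 ^ 2 + X 2 ^ 2 * X 3 ^ 2
    - 2 * (X 0 * X 1 * X 2 * X 3)

/-- The signature `⟨κ|λ⟩ = exp(πi(a_κ·b_λ − b_κ·a_λ))`. -/
noncomputable def sig (κ lam : Char) : ℂ :=
  Complex.exp ((Real.pi : ℂ) * Complex.I *
    (((∑ i, κ.1 i * lam.2 i : ℤ) : ℂ) - ((∑ i, κ.2 i * lam.1 i : ℤ) : ℂ)))

/-- Componentwise mod-2 sum of characteristics. -/
def addChar (κ lam : Char) : Char :=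
  (fun i => (κ.1 i + lam.1 i) % 2, fun i => (κ.2 i + lam.2 i) % 2)

/-- For each even characteristic `δ_d`, the ordering `(k₁,…,k₆)` of `{1,…,6}` (0-indexed) whose
first three entries form the triad of odd characteristics with `δ_d = ν_{k₁}+ν_{k₂}+ν_{k₃}`
and whose last three are the complementary indices. -/
def triad : Fin 10 → Fin 6 → Fin 6 :=
  ![![0,3,5,1,2,4], ![0,1,5,2,3,4], ![0,1,4,2,3,5], ![0,3,4,1,2,5], ![0,1,3,2,4,5],
    ![0,4,5,1,2,3], ![0,1,2,3,4,5], ![0,2,3,1,4,5], ![0,2,5,1,3,4], ![0,2,4,1,3,5]]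

/-- D'Hoker–Phong's `Ξ₆[δ]`. -/
noncomputable def Xi6 (d : Fin 10) (τ : Mat2) : ℂ :=
  ∑ i : Fin 3, ∑ j : Fin 3,
    if i < j then
      sig (νodd (triad d (Fin.castLE (by norm_num) i))) (νodd (triad d (Fin.castLE (by norm_num) j))) *
        ∏ m : Fin 3,
          theta (addChar (addChar (νodd (triad d (Fin.castLE (by norm_num) i)))
              (νodd (triad d (Fin.castLE (by norm_num) j))))
            (νodd (triad d (⟨m.1 + 3, by omega⟩ : Fin 6)))) τ ^ 4
    else 0

/-- The formal derivative `∂I₄/∂θ⁴[δ]` of the Igusa quartic with respect to the ten fourth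
powers of the even theta constants, regarded as independent variables. -/
noncomputable def Dd (d : Fin 10) (τ : Mat2) : ℂ :=
  (1 / 48 : ℂ) *
    (theta (δev d) τ ^ 4 * (∑ d' : Fin 10, theta (δev d') τ ^ 8) - 4 * theta (δev d) τ ^ 12)

/-- `f_δ = 2Ξ₆[δ] − ∂I₄/∂θ⁴[δ]`. -/
noncomputable def fδ (d : Fin 10) (τ : Mat2) : ℂ := 2 * Xi6 d τ - Dd d τ

/-- `Ψ₆`, the weight-6 modular form. -/
noncomputable def Ψ6 (τ : Mat2) : ℂ :=
  P0 τ ^ 3 - 9 * P0 τ * (P1 τ ^ 2 + P2 τ ^ 2 + P3 τ ^ 2 - 4 * P4 τ ^ 2)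
    + 54 * (P1 τ * P2 τ * P3 τ)

/-- `Ψ₁₀`, the weight-10 modular form. -/
noncomputable def Ψ10 (τ : Mat2) : ℂ := ∏ d : Fin 10, theta (δev d) τ ^ 2

/-- A characteristic is even when `a·b` is even. -/
def IsEvenChar (κ : Char) : Prop := (∑ i, κ.1 i * κ.2 i) % 2 = 0

/-- A characteristic is odd when `a·b` is odd. -/
def IsOddChar (κ : Char) : Prop := (∑ i, κ.1 i * κ.2 i) % 2 = 1

/-- The formal partial derivative `∂I₄/∂xᵢ` evaluated at `(P₀(τ),…,P₄(τ))`. -/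
noncomputable def dI4 (i : Fin 5) (τ : Mat2) : ℂ :=
  MvPolynomial.eval (fun k => Pv k τ) (MvPolynomial.pderiv i I4poly)

section ThetaSeries

open Matrix

variable {ι : Type*}

/-- The vector of `{0,1}^ι ⊆ ℤ^ι` representing a class of `ℤ^ι` modulo `2`; the class is encoded by
an element of `Fin 2` in each coordinate. -/
def bits (c : ι → Fin 2) (i : ι) : ℤ := (c i : ℕ)

/-- The change of summation indices in the duplication formula: a pair `(n, m)` of lattice vectors
is `(k + l + c, k - l)`, with `c` the parity of `n - m`. -/
def parityEquiv : (ι → Fin 2) × (ι → ℤ) × (ι → ℤ) ≃ (ι → ℤ) × (ι → ℤ) where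
  toFun x := (x.2.1 + x.2.2 + bits x.1, x.2.1 - x.2.2)
  invFun p :=
    (fun i ↦ ⟨((p.1 i - p.2 i) % 2).toNat, by omega⟩,
      fun i ↦ p.2 i + (p.1 i - p.2 i) / 2, fun i ↦ (p.1 i - p.2 i) / 2)
  left_inv := by
    rintro ⟨c, k, l⟩
    simp only [bits, Prod.mk.injEq, funext_iff, Pi.add_apply, Pi.sub_apply, Fin.ext_iff]
    grind
  right_inv := by
    rintro ⟨n, m⟩
    simp only [bits, Prod.mk.injEq, funext_iff, Pi.add_apply, Pi.sub_apply]
    grind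

variable [Fintype ι]

theorem summable_prod_apply {α : Type*} {f : ι → α → ℝ} (hf : ∀ i, Summable (f i))
    (hf₀ : ∀ i x, 0 ≤ f i x) : Summable fun x : ι → α ↦ ∏ i, f i (x i) := by
  classical
  refine summable_of_sum_le (c := ∏ i, ∑' x, f i x)
    (fun x ↦ Finset.prod_nonneg fun i _ ↦ hf₀ i (x i)) fun s ↦ ?_
  calc ∑ x ∈ s, ∏ i, f i (x i)
      ≤ ∑ x ∈ Fintype.piFinset fun i ↦ s.image (· i), ∏ i, f i (x i) :=
        Finset.sum_le_sum_of_subset_of_nonneg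
          (fun x hx ↦ Fintype.mem_piFinset.2 fun i ↦ Finset.mem_image_of_mem _ hx)
          fun x _ _ ↦ Finset.prod_nonneg fun i _ ↦ hf₀ i (x i)
    _ = ∏ i, ∑ x ∈ s.image (· i), f i x := (Finset.prod_univ_sum _ _).symm
    _ ≤ ∏ i, ∑' x, f i x :=
        Finset.prod_le_prod (fun i _ ↦ Finset.sum_nonneg fun x _ ↦ hf₀ i x)
          fun i _ ↦ (hf i).sum_le_tsum _ fun x _ ↦ hf₀ i x

open scoped MatrixOrder in
theorem exists_pos_mul_dotProduct_self_le {A : Matrix ι ι ℝ} (hA : A.PosDef) :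
    ∃ c > 0, ∀ x : ι → ℝ, c * (x ⬝ᵥ x) ≤ x ⬝ᵥ A *ᵥ x := by
  classical
  cases isEmpty_or_nonempty ι
  · exact ⟨1, one_pos, fun x ↦ by simp [dotProduct]⟩
  obtain ⟨c, hc, hcA⟩ := (CFC.exists_pos_algebraMap_le_iff (a := A)
    hA.isHermitian.isSelfAdjoint).2 fun x hx ↦ by
      rw [hA.isHermitian.spectrum_real_eq_range_eigenvalues] at hx
      obtain ⟨i, rfl⟩ := hx
      exact hA.eigenvalues_pos i
  refine ⟨c, hc, fun x ↦ ?_⟩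
  have := (Matrix.le_iff.1 hcA).dotProduct_mulVec_nonneg x
  simpa [sub_mulVec, Algebra.algebraMap_eq_smul_one, smul_mulVec, dotProduct_sub] using this

theorem summable_exp_neg_mul_add_sq {c : ℝ} (hc : 0 < c) (x : ℝ) :
    Summable fun n : ℤ ↦ Real.exp (-(c * (n + x) ^ 2)) := by
  have h := ((summable_jacobiTheta₂_term_iff ((c * x / Real.pi : ℝ) * Complex.I)
    ((c / Real.pi : ℝ) * Complex.I)).2 (by simpa using div_pos hc Real.pi_pos)).norm.mul_left
      (Real.exp (-(c * x ^ 2)))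
  refine h.congr fun n ↦ ?_
  rw [norm_jacobiTheta₂_term, ← Real.exp_add]
  simp only [neg_mul, Complex.im_ofReal_mul, Complex.I_im, mul_one]
  congr 1
  field_simp
  ring

/-- The term of index `n` in the theta series with characteristic `[a;b]`, in any genus. -/
noncomputable def thetaTerm (a b : ι → ℤ) (τ : Matrix ι ι ℂ) (n : ι → ℤ) : ℂ :=
  Complex.exp (Real.pi * Complex.I *
    ((∑ i, ∑ j, ((n i : ℂ) + (a i : ℂ) / 2) * τ i j * ((n j : ℂ) + (a j : ℂ) / 2))
      + ∑ i, ((n i : ℂ) + (a i : ℂ) / 2) * (b i : ℂ)))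

/-- The theta constant with characteristic `[a;b]`, in any genus, for integral `a` and `b` that need
not be reduced modulo `2`; it is `0` by convention where the series is not summable. -/
noncomputable def thetaSeries (a b : ι → ℤ) (τ : Matrix ι ι ℂ) : ℂ :=
  ∑' n, thetaTerm a b τ n

variable (a b : ι → ℤ)

theorem norm_thetaTerm (τ : Matrix ι ι ℂ) (n : ι → ℤ) : ‖thetaTerm a b τ n‖ =
    Real.exp (-(Real.pi * ((fun i ↦ (n i + a i / 2 : ℝ)) ⬝ᵥ
      τ.map Complex.im *ᵥ fun i ↦ (n i + a i / 2 : ℝ)))) := by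
  have hx (i : ι) : (n i : ℂ) + (a i : ℂ) / 2 = ((n i + a i / 2 : ℝ) : ℂ) := by push_cast; rfl
  have hb (i : ι) : (b i : ℂ) = ((b i : ℝ) : ℂ) := by norm_cast
  simp only [thetaTerm, hx, hb, Complex.norm_exp, dotProduct, mulVec, Matrix.map_apply]
  simp [Complex.mul_re, Complex.mul_im, Finset.mul_sum, mul_assoc]

theorem summable_norm_thetaTerm {τ : Matrix ι ι ℂ} (hτ : (τ.map Complex.im).PosDef) :
    Summable fun n ↦ ‖thetaTerm a b τ n‖ := by
  obtain ⟨c, hc, hcτ⟩ := exists_pos_mul_dotProduct_self_le hτ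
  refine .of_nonneg_of_le (fun _ ↦ norm_nonneg _) (fun n ↦ ?_)
    (summable_prod_apply
      (fun i ↦ summable_exp_neg_mul_add_sq (mul_pos Real.pi_pos hc) (a i / 2 : ℝ))
      fun _ _ ↦ (Real.exp_pos _).le)
  rw [norm_thetaTerm, ← Real.exp_sum, Finset.sum_neg_distrib, Real.exp_le_exp, neg_le_neg_iff]
  calc ∑ i, Real.pi * c * (n i + a i / 2 : ℝ) ^ 2
      = Real.pi * (c * ((fun i ↦ (n i + a i / 2 : ℝ)) ⬝ᵥ fun i ↦ (n i + a i / 2 : ℝ))) := by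
        simp only [dotProduct, Finset.mul_sum, mul_assoc, sq]
    _ ≤ _ := mul_le_mul_of_nonneg_left (hcτ _) Real.pi_pos.le

theorem thetaSeries_add_two_mul (v : ι → ℤ) (τ : Matrix ι ι ℂ) :
    thetaSeries (a + 2 * v) b τ = thetaSeries a b τ := by
  rw [thetaSeries, thetaSeries, ← (Equiv.addRight v).tsum_eq (thetaTerm a b τ)]
  have hx (n : ι → ℤ) (i : ι) :
      (n i : ℂ) + ((a + 2 * v) i : ℤ) / 2 = ((n + v) i : ℤ) + (a i : ℂ) / 2 := by
    simp only [Pi.add_apply, Pi.mul_apply, Pi.ofNat_apply, Int.cast_add, Int.cast_mul,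
      Int.cast_ofNat]
    ring
  simp only [thetaTerm, hx, Equiv.coe_addRight]

theorem exp_pi_mul_I_mul_intCast (m : ℤ) :
    Complex.exp (Real.pi * Complex.I * m) = (-1) ^ m := by
  rw [mul_comm, Complex.exp_int_mul, Complex.exp_pi_mul_I]

theorem thetaTerm_mul_thetaTerm (c k l : ι → ℤ) (τ : Matrix ι ι ℂ) :
    thetaTerm a b τ (k + l + c) * thetaTerm a b τ (k - l) =
      (-1) ^ ((a + c) ⬝ᵥ b) *
        (thetaTerm (a + c) 0 ((2 : ℂ) • τ) k * thetaTerm c 0 ((2 : ℂ) • τ) l) := by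
  -- The two indices on the left, shifted by `a/2`, are `u + v` and `u - v` for `u = k + (a+c)/2`
  -- and `v = l + c/2`; the mixed terms cancel in `Q(u+v) + Q(u-v) = 2 Q(u) + 2 Q(v)`.
  have hsign : (-1 : ℂ) ^ ((a + c) ⬝ᵥ b) = (-1) ^ ((2 * k + (a + c)) ⬝ᵥ b) := by
    have h2 : (2 * k) ⬝ᵥ b = 2 * (k ⬝ᵥ b) := by
      simp [dotProduct, Finset.mul_sum, mul_assoc]
    rw [add_dotProduct (2 * k), h2, zpow_add₀ (by norm_num), (even_two_mul _).neg_one_zpow,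
      one_mul]
  rw [hsign, ← exp_pi_mul_I_mul_intCast]
  simp only [thetaTerm, ← Complex.exp_add, ← mul_add]
  congr 2
  simp only [Pi.zero_apply, Int.cast_zero, mul_zero, Finset.sum_const_zero, add_zero]
  rw [add_add_add_comm, add_comm]
  congr 1
  · simp only [dotProduct, Int.cast_sum, ← Finset.sum_add_distrib]
    refine Finset.sum_congr rfl fun i _ ↦ ?_
    simp only [Pi.add_apply, Pi.sub_apply, Pi.mul_apply, Pi.ofNat_apply, Int.cast_add,
      Int.cast_sub, Int.cast_mul, Int.cast_ofNat]
    ring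
  · simp only [← Finset.sum_add_distrib]
    refine Finset.sum_congr rfl fun i _ ↦ Finset.sum_congr rfl fun j _ ↦ ?_
    simp only [Pi.add_apply, Pi.sub_apply, Int.cast_add, Int.cast_sub, Matrix.smul_apply,
      smul_eq_mul]
    ring

theorem thetaSeries_sq [DecidableEq ι] {τ : Matrix ι ι ℂ} (hτ : (τ.map Complex.im).PosDef) :
    thetaSeries a b τ ^ 2 = ∑ c : ι → Fin 2, (-1) ^ ((a + bits c) ⬝ᵥ b) *
      (thetaSeries (a + bits c) 0 ((2 : ℂ) • τ) * thetaSeries (bits c) 0 ((2 : ℂ) • τ)) := by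
  have h2τ : (((2 : ℂ) • τ).map Complex.im).PosDef := by
    have : ((2 : ℂ) • τ).map Complex.im = (2 : ℝ) • τ.map Complex.im := by ext; simp
    exact this ▸ hτ.smul two_pos
  have hτs := summable_norm_thetaTerm a b hτ
  have h2s (ε : ι → ℤ) := summable_norm_thetaTerm ε 0 h2τ
  have hprod := parityEquiv.summable_iff.2 (summable_mul_of_summable_norm hτs hτs)
  calc thetaSeries a b τ ^ 2
      = ∑' x : (ι → Fin 2) × (ι → ℤ) × (ι → ℤ),
          thetaTerm a b τ (parityEquiv x).1 * thetaTerm a b τ (parityEquiv x).2 := by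
        rw [sq, thetaSeries, tsum_mul_tsum_of_summable_norm hτs hτs, ← parityEquiv.tsum_eq]
    _ = ∑ c, ∑' y : (ι → ℤ) × (ι → ℤ),
          thetaTerm a b τ (y.1 + y.2 + bits c) * thetaTerm a b τ (y.1 - y.2) :=
        hprod.tsum_prod.trans (tsum_fintype _)
    _ = _ := by
        refine Finset.sum_congr rfl fun c _ ↦ ?_
        simp_rw [thetaTerm_mul_thetaTerm]
        rw [tsum_mul_left, thetaSeries, thetaSeries,
          tsum_mul_tsum_of_summable_norm (h2s _) (h2s _)]

end ThetaSeries

section GenusTwo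

theorem theta_eq_thetaSeries (κ : Char) (τ : Mat2) : theta κ τ = thetaSeries κ.1 κ.2 τ := rfl

theorem Θf_eq_thetaSeries (ε : Fin 2 → ℤ) (τ : Mat2) :
    Θf ε τ = thetaSeries ε 0 ((2 : ℂ) • τ) := by
  rw [Θf, theta_eq_thetaSeries, show ![0, 0] = (0 : Fin 2 → ℤ) by decide]

theorem Θf_emod_two (ε : Fin 2 → ℤ) (τ : Mat2) : Θf (fun i ↦ ε i % 2) τ = Θf ε τ := by
  have hε : (fun i ↦ ε i % 2) + 2 * (fun i ↦ ε i / 2) = ε :=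
    funext fun i ↦ Int.emod_add_mul_ediv (ε i) 2
  rw [Θf_eq_thetaSeries, Θf_eq_thetaSeries, ← thetaSeries_add_two_mul _ _ fun i ↦ ε i / 2, hε]

theorem theta_sq {τ : Mat2} (hτ : (τ.map Complex.im).PosDef) (κ : Char) :
    theta κ τ ^ 2 = ∑ p : Fin 2, ∑ q : Fin 2,
      (-1) ^ ((κ.1 0 + (p : ℕ)) * κ.2 0 + (κ.1 1 + (q : ℕ)) * κ.2 1) *
        (Θf ![(κ.1 0 + (p : ℕ)) % 2, (κ.1 1 + (q : ℕ)) % 2] τ * Θf ![(p : ℕ), (q : ℕ)] τ) := by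
  have hbits (p q : Fin 2) : bits ![p, q] = ![((p : ℕ) : ℤ), ((q : ℕ) : ℤ)] := by
    ext i; fin_cases i <;> rfl
  have hmod (p q : Fin 2) : ![(κ.1 0 + (p : ℕ)) % 2, (κ.1 1 + (q : ℕ)) % 2] =
      fun i ↦ (κ.1 + bits ![p, q]) i % 2 := by
    ext i; fin_cases i <;> rfl
  have hdot (p q : Fin 2) : (κ.1 0 + (p : ℕ)) * κ.2 0 + (κ.1 1 + (q : ℕ)) * κ.2 1 =
      (κ.1 + bits ![p, q]) ⬝ᵥ κ.2 := by
    rw [dotProduct, Fin.sum_univ_two]; rfl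
  simp only [hmod, hdot, ← hbits, Θf_emod_two]
  simp only [Θf_eq_thetaSeries]
  rw [theta_eq_thetaSeries, thetaSeries_sq _ _ hτ, ← (finTwoArrowEquiv (Fin 2)).symm.sum_comp,
    Fintype.sum_prod_type]
  rfl

/-- The ten linear forms in `x₀, …, x₄` that give the fourth powers of the even theta constants
`θ[δ₁], …, θ[δ₁₀]` at `x = (P₀, …, P₄)`. -/
def evenThetaForm {R : Type*} [CommRing R] (x : Fin 5 → R) : Fin 10 → R :=
  ![x 0 + x 1 + x 2 + x 3, x 0 - x 1 + x 2 - x 3, x 0 + x 1 - x 2 - x 3, x 0 - x 1 - x 2 + x 3,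
    2 * x 1 + 2 * x 4, 2 * x 1 - 2 * x 4, 2 * x 2 + 2 * x 4, 2 * x 2 - 2 * x 4,
    2 * x 3 + 2 * x 4, 2 * x 3 - 2 * x 4]

theorem theta_δev_pow_four {τ : Mat2} (hτ : (τ.map Complex.im).PosDef) (d : Fin 10) :
    theta (δev d) τ ^ 4 = evenThetaForm (fun k ↦ Pv k τ) d := by
  rw [show 4 = 2 * 2 from rfl, pow_mul, theta_sq hτ]
  fin_cases d <;>
    simp [δev, evenThetaForm, Pv, P0, P1, P2, P3, P4] <;>
    ring

/-- The ten cubics `Ξ₆[δ]` in the fourth powers `t` of the even theta constants, indexed as in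
`δev`. The three monomials of each correspond to the pairs `(1,2)`, `(1,3)`, `(2,3)` of positions
in the triad of `δ`, in this order. -/
def xiCubic {R : Type*} [CommRing R] (t : Fin 10 → R) : Fin 10 → R :=
  ![-(t 4 * t 7 * t 3) - t 1 * t 8 * t 5 - t 9 * t 2 * t 6,
    t 6 * t 4 * t 2 - t 8 * t 0 * t 5 + t 3 * t 9 * t 7,
    t 6 * t 4 * t 1 + t 9 * t 3 * t 5 - t 0 * t 8 * t 7,
    -(t 4 * t 7 * t 0) + t 2 * t 9 * t 5 + t 8 * t 1 * t 6,
    t 6 * t 2 * t 1 - t 7 * t 3 * t 0 + t 5 * t 8 * t 9,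
    t 2 * t 9 * t 3 - t 1 * t 8 * t 0 + t 7 * t 4 * t 6,
    t 4 * t 2 * t 1 + t 7 * t 9 * t 8 - t 5 * t 0 * t 3,
    t 6 * t 9 * t 8 - t 4 * t 3 * t 0 + t 5 * t 1 * t 2,
    t 6 * t 7 * t 9 - t 1 * t 0 * t 5 + t 3 * t 2 * t 4,
    t 6 * t 7 * t 8 + t 2 * t 3 * t 5 - t 0 * t 1 * t 4]

theorem addChar_mk (a₀ a₁ b₀ b₁ c₀ c₁ d₀ d₁ : ℤ) :
    addChar (![a₀, a₁], ![b₀, b₁]) (![c₀, c₁], ![d₀, d₁]) =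
      (![(a₀ + c₀) % 2, (a₁ + c₁) % 2], ![(b₀ + d₀) % 2, (b₁ + d₁) % 2]) := by
  ext i <;> fin_cases i <;> rfl

theorem sig_eq_neg_one_zpow (κ lam : Char) :
    sig κ lam = (-1) ^ (κ.1 ⬝ᵥ lam.2 - κ.2 ⬝ᵥ lam.1) := by
  rw [sig, ← exp_pi_mul_I_mul_intCast, Int.cast_sub]
  rfl

theorem Xi6_eq_xiCubic (d : Fin 10) (τ : Mat2) :
    Xi6 d τ = xiCubic (fun d' ↦ theta (δev d') τ ^ 4) d := by
  simp only [Xi6, Fin.sum_univ_three, Fin.prod_univ_three, sig_eq_neg_one_zpow]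
  fin_cases d <;>
    simp [νodd, triad, δev, xiCubic, addChar_mk, dotProduct] <;>
    ring

theorem eval_pderiv_I4poly (x : Fin 5 → ℂ) (i : Fin 5) :
    MvPolynomial.eval x (MvPolynomial.pderiv i I4poly) =
      ![2 * x 4 ^ 2 * x 0 - 2 * x 1 * x 2 * x 3,
        2 * x 1 * (x 2 ^ 2 + x 3 ^ 2 - x 4 ^ 2) - 2 * x 0 * x 2 * x 3,
        2 * x 2 * (x 1 ^ 2 + x 3 ^ 2 - x 4 ^ 2) - 2 * x 0 * x 1 * x 3,
        2 * x 3 * (x 1 ^ 2 + x 2 ^ 2 - x 4 ^ 2) - 2 * x 0 * x 1 * x 2,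
        4 * x 4 ^ 3 + 2 * x 4 * (x 0 ^ 2 - x 1 ^ 2 - x 2 ^ 2 - x 3 ^ 2)] i := by
  have h2 : (2 : MvPolynomial (Fin 5) ℂ) = MvPolynomial.C 2 := (map_ofNat MvPolynomial.C 2).symm
  fin_cases i <;>
    simp [I4poly, h2, MvPolynomial.pderiv_X, Derivation.leibniz, Derivation.leibniz_pow] <;>
    ring

/-- The ten linear combinations of the partial derivatives `g = (∂₀, …, ∂₄)` of the Igusa quartic
that give the `Ξ₆[δ]`, indexed as in `δev`. -/
def gradientCombination {R : Type*} [CommRing R] (g : Fin 5 → R) : Fin 10 → R :=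
  ![6 * g 0 + 2 * g 1 + 2 * g 2 + 2 * g 3, 6 * g 0 - 2 * g 1 + 2 * g 2 - 2 * g 3,
    6 * g 0 + 2 * g 1 - 2 * g 2 - 2 * g 3, 6 * g 0 - 2 * g 1 - 2 * g 2 + 2 * g 3,
    4 * g 1 + 2 * g 4, 4 * g 1 - 2 * g 4, 4 * g 2 + 2 * g 4, 4 * g 2 - 2 * g 4,
    4 * g 3 + 2 * g 4, 4 * g 3 - 2 * g 4]

theorem xiCubic_evenThetaForm (x : Fin 5 → ℂ) :
    xiCubic (evenThetaForm x) =
      gradientCombination fun i ↦ MvPolynomial.eval x (MvPolynomial.pderiv i I4poly) := by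
  funext d
  fin_cases d <;>
    simp only [xiCubic, evenThetaForm, gradientCombination, eval_pderiv_I4poly, Matrix.cons_val,
      Fin.zero_eta, Fin.mk_one, Fin.reduceFinMk] <;>
    ring

theorem statement5_general {τ : Mat2} (hτ : (τ.map Complex.im).PosDef) (d : Fin 10) :
    Xi6 d τ = gradientCombination (fun i ↦ dI4 i τ) d := by
  simp only [Xi6_eq_xiCubic, theta_δev_pow_four hτ]
  exact congrFun (xiCubic_evenThetaForm _) d

end GenusTwo

/-- expansion of the ten `Ξ₆[δ]` on the derivatives of the Igusa quartic. -/
theorem statement5 : ∀ τ ∈ SiegelH2,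
    Xi6 0 τ = 6 * dI4 0 τ + 2 * dI4 1 τ + 2 * dI4 2 τ + 2 * dI4 3 τ ∧
    Xi6 1 τ = 6 * dI4 0 τ - 2 * dI4 1 τ + 2 * dI4 2 τ - 2 * dI4 3 τ ∧
    Xi6 2 τ = 6 * dI4 0 τ + 2 * dI4 1 τ - 2 * dI4 2 τ - 2 * dI4 3 τ ∧
    Xi6 3 τ = 6 * dI4 0 τ - 2 * dI4 1 τ - 2 * dI4 2 τ + 2 * dI4 3 τ ∧
    Xi6 4 τ = 4 * dI4 1 τ + 2 * dI4 4 τ ∧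
    Xi6 5 τ = 4 * dI4 1 τ - 2 * dI4 4 τ ∧
    Xi6 6 τ = 4 * dI4 2 τ + 2 * dI4 4 τ ∧
    Xi6 7 τ = 4 * dI4 2 τ - 2 * dI4 4 τ ∧
    Xi6 8 τ = 4 * dI4 3 τ + 2 * dI4 4 τ ∧
    Xi6 9 τ = 4 * dI4 3 τ - 2 * dI4 4 τ := by
  intro τ hτ
  have h := statement5_general hτ.2
  exact ⟨h 0, h 1, h 2, h 3, h 4, h 5, h 6, h 7, h 8, h 9⟩

end TwoLoop
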